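/- Let S and W be real vector spaces, let ξ, N ∈ W be linearly independent vectors, let g and B be symmetric bilinear forms on S, and let φ, ψ ∈ ℝ. Then there exists a vector H ∈ W such that B(X,Y)·(φξ + N) + ψ·g(X,Y)·ξ = g(X,Y)·H for all X, Y ∈ S if and only if there exists β ∈ ℝ with B = β·g; moreover, when B = β·g one may take H = (βφ + ψ)ξ + βN. -/

import Mathlib

/-!
For the forward direction, put `v = φ • ξ + N`, which is nonzero by linear independence. The
umbilicity equation says `B(X,Y) • v = g(X,Y) • (H - ψ • ξ)`. If `g = 0`, this forces `B = 0`.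
Otherwise fix `X₀, Y₀` with `g(X₀,Y₀) ≠ 0`; eliminating `H` between the equations at `(X,Y)` and
`(X₀,Y₀)` gives `g(X₀,Y₀) B(X,Y) = g(X,Y) B(X₀,Y₀)`, so `β = B(X₀,Y₀) / g(X₀,Y₀)`.
The converse is the explicit formula for `H`.
-/

/-- Pointwise computation at the heart of Theorem 3.6: the leaf second
fundamental form `h'(X,Y) = B(X,Y)(φξ + N) + ψ g(X,Y) ξ` is umbilical,
i.e. of the form `g(X,Y) • H` for a fixed `H`, iff `B = β • g` for some `β`;
and when `B = β • g` one may take `H = (βφ + ψ) • ξ + β • N`. -/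
theorem leaf_umbilical_iff_totally_umbilical
    {S W : Type*} [AddCommGroup S] [Module ℝ S] [AddCommGroup W] [Module ℝ W]
    (ξ N : W) (hind : LinearIndependent ℝ ![ξ, N])
    (g B : LinearMap.BilinForm ℝ S)
    (hg : ∀ x y : S, g x y = g y x) (hB : ∀ x y : S, B x y = B y x)
    (φ ψ : ℝ) :
    ((∃ H : W, ∀ X Y : S, B X Y • (φ • ξ + N) + (ψ * g X Y) • ξ = g X Y • H) ↔
      ∃ β : ℝ, B = β • g) ∧
    (∀ β : ℝ, B = β • g →
      ∀ X Y : S, B X Y • (φ • ξ + N) + (ψ * g X Y) • ξ =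
        g X Y • ((β * φ + ψ) • ξ + β • N)) := by
  have hexp : ∀ β : ℝ, B = β • g →
      ∀ X Y : S, B X Y • (φ • ξ + N) + (ψ * g X Y) • ξ =
        g X Y • ((β * φ + ψ) • ξ + β • N) := by
    rintro β rfl X Y
    simp only [LinearMap.smul_apply, smul_eq_mul]
    module
  refine ⟨⟨?_, fun ⟨β, hβ⟩ => ⟨_, hexp β hβ⟩⟩, hexp⟩
  rintro ⟨H, hH⟩
  have hv : φ • ξ + N ≠ 0 := by
    intro h
    have h1 := (LinearIndependent.pair_iff.mp hind φ 1 (by rwa [one_smul])).2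
    exact one_ne_zero h1
  by_cases hg0 : ∀ X Y, g X Y = 0
  · refine ⟨0, LinearMap.ext₂ fun X Y => ?_⟩
    have h := hH X Y
    simp only [hg0, mul_zero, zero_smul, add_zero] at h
    simpa using (smul_eq_zero.mp h).resolve_right hv
  · push Not at hg0
    obtain ⟨X₀, Y₀, h0⟩ := hg0
    refine ⟨B X₀ Y₀ / g X₀ Y₀, LinearMap.ext₂ fun X Y => ?_⟩
    have key : (g X₀ Y₀ * B X Y - g X Y * B X₀ Y₀) • (φ • ξ + N) = 0 := by
      linear_combination (norm := module) g X₀ Y₀ • hH X Y - g X Y • hH X₀ Y₀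
    have h := (smul_eq_zero.mp key).resolve_right hv
    simp only [LinearMap.smul_apply, smul_eq_mul]
    field_simp
    linarith
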